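/- arXiv:1007.2391 — 2 statements merged into one kernel-verified Lean document; each statement's English description precedes it below -/
import Mathlib

section
/- Let N ≥ 1 and let H ⊂ ℝ^N be a compact convex set satisfying the Markov–Lipschitz inequality with constant M > 0. Let d, s ≥ 1 be integers, α, β > 0, and let Λ : (ℝ^N)^s → ℝ be a polynomial in the Ns real variables that is nonnegative on H^s and such that for each j ∈ {1,…,s} and each fixed choice of the other s−1 coordinate blocks, the function t ↦ Λ(a_1,…,a_{j−1},t,a_{j+1},…,a_s) of t ∈ ℝ^N is a polynomial of degree at most α d^β. If a* = (a*_1,…,a*_s) ∈ H^s satisfies Λ(a*) = max_{a ∈ H^s} Λ(a), then for every a = (a_1,…,a_s) ∈ H^s with |a_j − a*_j| ≤ e^{−√d} for all j = 1,…,s, one has Λ(a) ≥ Λ(a*) · (1 − s M α^2 d^{2β} e^{−√d}). -/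
open Filter

noncomputable section

/-- Points of `ℝ^N` with the Euclidean metric. -/
abbrev RPt (N : ℕ) := EuclideanSpace ℝ (Fin N)

/-- `H ⊂ ℝ^N` satisfies the Markov–Lipschitz inequality with constant `M`:
`|p(x) - p(y)| ≤ M (deg p)² (sup_H |p|) |x - y|` for all real polynomials `p` in `N`
variables and all `x, y ∈ H`. -/
def MarkovLip (N : ℕ) (H : Set (RPt N)) (M : ℝ) : Prop :=
  ∀ p : MvPolynomial (Fin N) ℝ, ∀ x ∈ H, ∀ y ∈ H,
    |MvPolynomial.eval (fun i => x i) p - MvPolynomial.eval (fun i => y i) p| ≤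
      M * (p.totalDegree : ℝ) ^ 2 *
        sSup ((fun z : RPt N => |MvPolynomial.eval (fun i => z i) p|) '' H) * dist x y

/-- **Lemma (nonnegative polynomials near a maximizer).** Let `H ⊂ ℝ^N` be compact convex
satisfying the Markov–Lipschitz inequality with constant `M > 0`. Let `Λ` be a polynomial in
the `Ns` real variables, nonnegative on `H^s`, of degree at most `α d^β` in each block of `N`
variables. If `a*` maximizes `Λ` over `H^s`, then for every `a ∈ H^s` with
`|a_j - a*_j| ≤ e^{-√d}` for all `j`, one has `Λ(a) ≥ Λ(a*)(1 - s M α² d^{2β} e^{-√d})`. -/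
theorem nonneg_poly_lower_bound_near_max
    {N : ℕ} (hN : 1 ≤ N) (H : Set (RPt N)) (hHcomp : IsCompact H) (hHconv : Convex ℝ H)
    (M : ℝ) (hM : 0 < M) (hML : MarkovLip N H M)
    (d s : ℕ) (hd : 1 ≤ d) (hs : 1 ≤ s) (α β : ℝ) (hα : 0 < α) (hβ : 0 < β)
    (P : MvPolynomial (Fin s × Fin N) ℝ)
    (Λ : (Fin s → RPt N) → ℝ)
    (hΛ : ∀ a : Fin s → RPt N, Λ a = MvPolynomial.eval (fun q => a q.1 q.2) P)
    (hnonneg : ∀ a : Fin s → RPt N, (∀ j, a j ∈ H) → 0 ≤ Λ a)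
    (hdeg : ∀ (j : Fin s) (a : Fin s → RPt N), ∃ q : MvPolynomial (Fin N) ℝ,
      (q.totalDegree : ℝ) ≤ α * (d : ℝ) ^ β ∧
      ∀ t : RPt N, Λ (Function.update a j t) = MvPolynomial.eval (fun i => t i) q)
    (astar : Fin s → RPt N) (hastar : ∀ j, astar j ∈ H)
    (hmax : ∀ a : Fin s → RPt N, (∀ j, a j ∈ H) → Λ a ≤ Λ astar)
    (a : Fin s → RPt N) (ha : ∀ j, a j ∈ H)
    (hclose : ∀ j, dist (a j) (astar j) ≤ Real.exp (-Real.sqrt d)) :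
    Λ astar * (1 - s * M * α ^ 2 * (d : ℝ) ^ (2 * β) * Real.exp (-Real.sqrt d)) ≤ Λ a := by
  set C : ℝ := M * α ^ 2 * (d : ℝ) ^ (2 * β) * Real.exp (-Real.sqrt d) * Λ astar with hC
  have hmem : ∀ (S : Finset (Fin s)) (j : Fin s), S.piecewise a astar j ∈ H := by
    intro S j
    by_cases h : j ∈ S
    · simpa [h] using ha j
    · simpa [h] using hastar j
  have key : ∀ S : Finset (Fin s), Λ astar - Λ (S.piecewise a astar) ≤ (S.card : ℝ) * C := by
    intro S
    induction S using Finset.induction_on with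
    | empty => simp
    | insert j S hj ih =>
      set b := S.piecewise a astar with hb
      obtain ⟨q, hq, hqe⟩ := hdeg j b
      have hbj : b j = astar j := by simp [hb, hj]
      have hmu : ∀ t ∈ H, ∀ i, Function.update b j t i ∈ H := by
        intro t ht i
        by_cases h : i = j
        · subst h; simpa using ht
        · simpa [h] using hmem S i
      have h1 := hML q (astar j) (hastar j) (a j) (ha j)
      rw [← hqe, ← hqe, ← hbj, Function.update_eq_self, hbj] at h1
      have hsup : sSup ((fun z : RPt N => |MvPolynomial.eval (fun i => z i) q|) '' H)
          ≤ Λ astar := by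
        apply csSup_le ⟨_, Set.mem_image_of_mem _ (ha j)⟩
        rintro _ ⟨z, hz, rfl⟩
        simp only []
        rw [← hqe, abs_of_nonneg (hnonneg _ (hmu z hz))]
        exact hmax _ (hmu z hz)
      have hL := hnonneg astar hastar
      have hdd : dist (astar j) (a j) ≤ Real.exp (-Real.sqrt d) := by
        rw [dist_comm]; exact hclose j
      have hq2 : (q.totalDegree : ℝ) ^ 2 ≤ α ^ 2 * (d : ℝ) ^ (2 * β) := by
        have : (d : ℝ) ^ (2 * β) = ((d : ℝ) ^ β) ^ 2 := by
          rw [mul_comm, Real.rpow_mul (by positivity)]; norm_num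
        rw [this, ← mul_pow]
        exact pow_le_pow_left₀ (by positivity) hq 2
      have h2 : M * (q.totalDegree : ℝ) ^ 2 *
          sSup ((fun z : RPt N => |MvPolynomial.eval (fun i => z i) q|) '' H) *
            dist (astar j) (a j) ≤ M * (α ^ 2 * (d : ℝ) ^ (2 * β)) * Λ astar *
              Real.exp (-Real.sqrt d) := by
        gcongr
        apply Real.sSup_nonneg
        rintro _ ⟨z, hz, rfl⟩
        exact abs_nonneg _
      have h3 := (le_abs_self _).trans (h1.trans h2)
      rw [Finset.piecewise_insert, Finset.card_insert_of_notMem hj, ← hb]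
      push_cast
      have : C = M * (α ^ 2 * (d : ℝ) ^ (2 * β)) * Λ astar * Real.exp (-Real.sqrt d) := by
        rw [hC]; ring
      linarith
  have h := key Finset.univ
  rw [Finset.piecewise_univ, Finset.card_univ, Fintype.card_fin, hC] at h
  linarith

end
end

section
/- Let H ⊂ ℂ^n be a compact convex set with nonempty interior and let ν_1, ν_2 be two positive Borel measures on H, each of total mass at most 1 and each satisfying the density condition with H. Then for every μ ∈ 𝓜(H), the functional J(μ) computed using ν = ν_1 equals the functional J(μ) computed using ν = ν_2 (both equal W(μ), whose definition does not involve ν). -/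
open MeasureTheory Filter Topology ENNReal

noncomputable section

/-- Points of `ℂⁿ` (with the Euclidean metric). -/
abbrev Pt (n : ℕ) := EuclideanSpace ℂ (Fin n)

instance Pt.measurableSpace (n : ℕ) : MeasurableSpace (Pt n) := borel _

instance Pt.borelSpace (n : ℕ) : BorelSpace (Pt n) := ⟨rfl⟩

/-- `s(d) = binomial(d+n, n)`, the number of multi-indices `α ∈ ℕⁿ` with `|α| ≤ d`. -/
def sdim (n d : ℕ) : ℕ := (d + n).choose n

lemma sdim_pos (n d : ℕ) : 0 < sdim n d := Nat.choose_pos (Nat.le_add_left n d)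

/-- `E` is an enumeration of the multi-indices `α ∈ ℕⁿ` with `|α| ≤ d`. -/
def IsEnum (n d : ℕ) (E : Fin (sdim n d) → (Fin n → ℕ)) : Prop :=
  Function.Injective E ∧ ∀ α : Fin n → ℕ, ((∑ i, α i) ≤ d ↔ α ∈ Set.range E)

/-- The Vandermonde determinant `VDM_d(a_1, …, a_{s(d)}) = det [a_j^{α_i}]`. -/
def VDM (n d : ℕ) (E : Fin (sdim n d) → (Fin n → ℕ))
    (a : Fin (sdim n d) → Pt n) : ℂ :=
  Matrix.det (Matrix.of fun i j => ∏ k, (a j k) ^ (E i k))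

/-- `|VDM_d^Q(a)| = |VDM_d(a)| · w(a_1)^d ⋯ w(a_s)^d` where `w = e^{-Q}`, as a member
of `ℝ≥0∞`. -/
def absVDMQ (n d : ℕ) (E : Fin (sdim n d) → (Fin n → ℕ)) (H : Set (Pt n)) (Q : H → ℝ)
    (a : Fin (sdim n d) → H) : ℝ≥0∞ :=
  ENNReal.ofReal (‖VDM n d E (fun j => (a j : Pt n))‖ *
    ∏ j, Real.exp (-(d : ℝ) * Q (a j)))

/-- The empirical measure `(1/s) ∑_j δ_{a_j}` of a tuple of points. -/
def emp {X : Type*} [MeasurableSpace X] {s : ℕ} (a : Fin s → X) : Measure X :=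
  ((s : ℝ≥0∞))⁻¹ • ∑ j, Measure.dirac (a j)

lemma emp_univ {X : Type*} [MeasurableSpace X] {s : ℕ} (hs : s ≠ 0) (a : Fin s → X) :
    emp a Set.univ = 1 := by
  have : (emp a) Set.univ = ((s : ℝ≥0∞))⁻¹ * ∑ j : Fin s, (Measure.dirac (a j)) Set.univ := by
    simp [emp, Measure.smul_apply, Measure.finset_sum_apply]
  rw [this]
  simp only [measure_univ, Finset.sum_const, Finset.card_univ, Fintype.card_fin, nsmul_eq_mul,
    mul_one]
  exact ENNReal.inv_mul_cancel (by exact_mod_cast hs) (by simp)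

/-- The empirical probability measure `(1/s) ∑_j δ_{a_j}` of a tuple of points. -/
def empPM {X : Type*} [MeasurableSpace X] {s : ℕ} (hs : s ≠ 0) (a : Fin s → X) :
    ProbabilityMeasure X := ⟨emp a, ⟨emp_univ hs a⟩⟩

/-- `G̃_s(μ)`: the tuples in `H^s` whose empirical measure lies in `G`. -/
def Gtilde {n : ℕ} (d : ℕ) (H : Set (Pt n)) (G : Set (ProbabilityMeasure H)) :
    Set (Fin (sdim n d) → H) :=
  {a | empPM (sdim_pos n d).ne' a ∈ G}

/-- `J_d^Q(μ, G) = (∫_{G̃_s(μ)} |VDM_d^Q(a)|² dν^{⊗s}(a))^{1/(2ds)}`. -/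
def Jd (n d : ℕ) (E : Fin (sdim n d) → (Fin n → ℕ)) (H : Set (Pt n)) (ν : Measure H)
    (Q : H → ℝ) (G : Set (ProbabilityMeasure H)) : ℝ≥0∞ :=
  (∫⁻ a in Gtilde d H G, (absVDMQ n d E H Q a) ^ 2
      ∂(Measure.pi fun _ : Fin (sdim n d) => ν)) ^ (1 / (2 * d * sdim n d) : ℝ)

/-- `W_d^Q(μ, G) = sup { |VDM_d^Q(a)|^{1/(ds)} : a ∈ G̃_s(μ) }`. -/
def Wd (n d : ℕ) (E : Fin (sdim n d) → (Fin n → ℕ)) (H : Set (Pt n))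
    (Q : H → ℝ) (G : Set (ProbabilityMeasure H)) : ℝ≥0∞ :=
  ⨆ a ∈ Gtilde d H G, (absVDMQ n d E H Q a) ^ (1 / (d * sdim n d) : ℝ)

/-- `J^Q(μ) = inf_{G ∋ μ} limsup_{d → ∞} J_d^Q(μ, G)`, the infimum being over all open
neighborhoods `G` of `μ` in `𝓜(H)`. -/
def JQ (n : ℕ) (E : ∀ d, Fin (sdim n d) → (Fin n → ℕ)) (H : Set (Pt n)) (ν : Measure H)
    (Q : H → ℝ) (μ : ProbabilityMeasure H) : ℝ≥0∞ :=
  ⨅ G ∈ {G : Set (ProbabilityMeasure H) | IsOpen G ∧ μ ∈ G},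
    limsup (fun d => Jd n d (E d) H ν Q G) atTop

/-- `W^Q(μ) = inf_{G ∋ μ} limsup_{d → ∞} W_d^Q(μ, G)`, the infimum being over all open
neighborhoods `G` of `μ` in `𝓜(H)`. -/
def WQ (n : ℕ) (E : ∀ d, Fin (sdim n d) → (Fin n → ℕ)) (H : Set (Pt n))
    (Q : H → ℝ) (μ : ProbabilityMeasure H) : ℝ≥0∞ :=
  ⨅ G ∈ {G : Set (ProbabilityMeasure H) | IsOpen G ∧ μ ∈ G},
    limsup (fun d => Wd n d (E d) H Q G) atTop

/-- `δ̄^w(H) = lim sup_d (sup_{a ∈ H^{s(d)}} |VDM_d^Q(a)|)^{1/(d·s(d))}` where `w = e^{-Q}`. -/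
def deltaBar (n : ℕ) (E : ∀ d, Fin (sdim n d) → (Fin n → ℕ)) (H : Set (Pt n))
    (Q : H → ℝ) : ℝ≥0∞ :=
  limsup (fun d => (⨆ a : Fin (sdim n d) → H, absVDMQ n d (E d) H Q a)
    ^ (1 / (d * sdim n d) : ℝ)) atTop

/-- The density condition on `(H, ν)`: there is `T > 0` such that for every `z₀ ∈ H`
there is `r(z₀) > 0` with `ν(B(z₀,r)) ≥ r^T` for all `0 < r < r(z₀)`. -/
def DensityCond {n : ℕ} (H : Set (Pt n)) (ν : Measure H) : Prop :=
  ∃ T : ℝ, 0 < T ∧ ∀ z₀ : H, ∃ r₀ > 0, ∀ r : ℝ, 0 < r → r < r₀ →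
    ENNReal.ofReal (r ^ T) ≤ ν (Metric.ball z₀ r)



def joukF (q : Polynomial ℂ) (d : ℕ) (v : ℂ) : ℂ :=
  ∑ k ∈ Finset.range (d + 1), q.coeff k * v ^ (d - k) * ((v ^ 2 + 1) / 2) ^ k

lemma joukF_eq (q : Polynomial ℂ) (d : ℕ) (hq : q.natDegree ≤ d) (v : ℂ) (hv : v ≠ 0) :
    joukF q d v = v ^ d * q.eval ((v ^ 2 + 1) / (2 * v)) := by
  rw [Polynomial.eval_eq_sum_range' (Nat.lt_succ_of_le hq), Finset.mul_sum]
  apply Finset.sum_congr rfl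
  intro k hk
  have hk' : k ≤ d := Nat.lt_succ_iff.mp (Finset.mem_range.mp hk)
  obtain ⟨m, rfl⟩ := Nat.exists_eq_add_of_le hk'
  rw [Nat.add_sub_cancel_left, pow_add, div_pow, div_pow, mul_pow]
  field_simp

lemma joukF_diff (q : Polynomial ℂ) (d : ℕ) : Differentiable ℂ (joukF q d) := by
  unfold joukF
  fun_prop

lemma jouk_circle (v : ℂ) (hv : ‖v‖ = 1) : (v ^ 2 + 1) / (2 * v) = (v.re : ℂ) := by
  have h0 : v ≠ 0 := by
    rintro rfl
    simp at hv
  have h1 : v * (starRingEnd ℂ) v = 1 := by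
    rw [Complex.mul_conj, Complex.normSq_eq_norm_sq, hv]; simp
  have h2 : (v.re : ℂ) = (v + (starRingEnd ℂ) v) / 2 := Complex.re_eq_add_conj v
  rw [h2]
  field_simp
  linear_combination - h1

lemma joukF_circle (q : Polynomial ℂ) (d : ℕ) (hq : q.natDegree ≤ d) (v : ℂ) (hv : ‖v‖ = 1) :
    ‖joukF q d v‖ = ‖q.eval (v.re : ℂ)‖ := by
  have h0 : v ≠ 0 := by
    rintro rfl
    simp at hv
  rw [joukF_eq q d hq v h0, jouk_circle v hv, norm_mul, norm_pow, hv]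
  simp

/-- Bernstein-Walsh. -/
lemma bernstein_walsh (q : Polynomial ℂ) (d : ℕ) (hq : q.natDegree ≤ d) (M : ℝ)
    (hM : ∀ x : ℝ, x ∈ Set.Icc (-1 : ℝ) 1 → ‖q.eval (x : ℂ)‖ ≤ M) (v : ℂ) (hv0 : v ≠ 0)
    (hv : ‖v‖ ≤ 1) : ‖v‖ ^ d * ‖q.eval ((v ^ 2 + 1) / (2 * v))‖ ≤ M := by
  have h := Complex.norm_le_of_forall_mem_frontier_norm_le (f := joukF q d)
    (U := Metric.ball 0 1) Metric.isBounded_ball (joukF_diff q d).diffContOnCl (C := M)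
    (by
      intro z hz
      rw [frontier_ball _ one_ne_zero] at hz
      have hz1 : ‖z‖ = 1 := by simpa using hz
      rw [joukF_circle q d hq z hz1]
      apply hM
      have := Complex.abs_re_le_norm z
      rw [hz1] at this
      exact abs_le.mp this) (z := v) (by
      rw [closure_ball _ one_ne_zero]; simpa using hv)
  rwa [joukF_eq q d hq v hv0, norm_mul, norm_pow] at h

lemma jouk_surj (ζ : ℂ) : ∃ v : ℂ, v ≠ 0 ∧ ‖v‖ ≤ 1 ∧ (v ^ 2 + 1) / (2 * v) = ζ := by
  obtain ⟨s, hs⟩ := IsAlgClosed.exists_eq_mul_self (ζ ^ 2 - 1)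
  have hprod : (ζ + s) * (ζ - s) = 1 := by linear_combination hs
  have h1 : ζ + s ≠ 0 := left_ne_zero_of_mul_eq_one hprod
  have h2 : ζ - s ≠ 0 := right_ne_zero_of_mul_eq_one hprod
  by_cases h : ‖ζ + s‖ ≤ 1
  · refine ⟨ζ + s, h1, h, ?_⟩
    rw [div_eq_iff (by simpa using h1)]
    linear_combination - hs
  · refine ⟨ζ - s, h2, ?_, ?_⟩
    · have hn : ‖ζ + s‖ * ‖ζ - s‖ = 1 := by rw [← norm_mul, hprod, norm_one]
      push Not at h
      nlinarith [norm_nonneg (ζ - s)]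
    · rw [div_eq_iff (by simpa using h2)]
      linear_combination - hs

lemma jouk_dist (v : ℂ) (hv0 : v ≠ 0) (hv : ‖v‖ ≤ 1) (x : ℝ) (hx : x ∈ Set.Icc (-1 : ℝ) 1) :
    (1 - ‖v‖) ^ 2 ≤ 2 * ‖v‖ * ‖(v ^ 2 + 1) / (2 * v) - (x : ℂ)‖ := by
  set w : ℂ := Complex.exp (Real.arccos x * Complex.I) with hw
  have hw1 : ‖w‖ = 1 := Complex.norm_exp_ofReal_mul_I _
  have hre : w.re = x := by
    rw [hw, Complex.exp_ofReal_mul_I_re, Real.cos_arccos hx.1 hx.2]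
  have h1 : w * (starRingEnd ℂ) w = 1 := by
    rw [Complex.mul_conj, Complex.normSq_eq_norm_sq, hw1]; simp
  have h2 : (x : ℂ) = (w + (starRingEnd ℂ) w) / 2 := by
    rw [← hre]; exact Complex.re_eq_add_conj w
  have h3 : (v - w) * (v - (starRingEnd ℂ) w) = 2 * v * ((v ^ 2 + 1) / (2 * v) - (x : ℂ)) := by
    rw [h2]
    field_simp
    linear_combination h1
  have h4 : ‖v - w‖ * ‖v - (starRingEnd ℂ) w‖ = 2 * ‖v‖ * ‖(v ^ 2 + 1) / (2 * v) - (x : ℂ)‖ := by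
    rw [← norm_mul, h3, norm_mul, norm_mul]; simp
  rw [← h4, sq]
  have h5 : 1 - ‖v‖ ≤ ‖v - w‖ := by
    rw [norm_sub_rev, ← hw1]; exact norm_sub_norm_le _ _
  have h6 : 1 - ‖v‖ ≤ ‖v - (starRingEnd ℂ) w‖ := by
    have : ‖(starRingEnd ℂ) w‖ = 1 := by rw [RCLike.norm_conj, hw1]
    rw [norm_sub_rev, ← this]; exact norm_sub_norm_le _ _
  exact mul_le_mul h5 h6 (by linarith) (norm_nonneg _)

lemma poly_nbhd_bound (q : Polynomial ℂ) (d : ℕ) (hq : q.natDegree ≤ d) (M : ℝ)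
    (hM : ∀ x : ℝ, x ∈ Set.Icc (-1 : ℝ) 1 → ‖q.eval (x : ℂ)‖ ≤ M) (r : ℝ) (hr0 : 0 < r)
    (hr1 : r < 1) (x : ℝ) (hx : x ∈ Set.Icc (-1 : ℝ) 1) (ζ : ℂ)
    (hζ : ‖ζ - x‖ ≤ (1 - r) ^ 2 / 2) : ‖q.eval ζ‖ ≤ M / r ^ d := by
  obtain ⟨v, hv0, hv, rfl⟩ := jouk_surj ζ
  have hvr : r ≤ ‖v‖ := by
    by_contra hlt
    push Not at hlt
    have h1 := jouk_dist v hv0 hv x hx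
    have hvp : 0 < ‖v‖ := norm_pos_iff.mpr hv0
    have h2 : 2 * ‖v‖ * ‖(v ^ 2 + 1) / (2 * v) - (x : ℂ)‖ ≤ 2 * ‖v‖ * ((1 - r) ^ 2 / 2) := by
      gcongr
    have h3 : (1 - r) ^ 2 < (1 - ‖v‖) ^ 2 := by
      apply pow_lt_pow_left₀ (by linarith) (by linarith) (by norm_num)
    nlinarith [sq_nonneg (1 - r)]
  have h := bernstein_walsh q d hq M hM v hv0 hv
  rw [le_div_iff₀ (by positivity), mul_comm]
  refine le_trans ?_ h
  gcongr

lemma poly_lipschitz (q : Polynomial ℂ) (d : ℕ) (hq : q.natDegree ≤ d) (M : ℝ)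
    (hM : ∀ x : ℝ, x ∈ Set.Icc (-1 : ℝ) 1 → ‖q.eval (x : ℂ)‖ ≤ M) (r : ℝ) (hr0 : 0 < r)
    (hr1 : r < 1) (x y : ℝ) (hx : x ∈ Set.Icc (-1 : ℝ) 1) (hy : y ∈ Set.Icc (-1 : ℝ) 1) :
    ‖q.eval (y : ℂ) - q.eval (x : ℂ)‖ ≤ M / r ^ d / ((1 - r) ^ 2 / 2) * |y - x| := by
  have hκ : 0 < (1 - r) ^ 2 / 2 := by
    have : 0 < 1 - r := by linarith
    positivity
  have key := (convex_Icc (-1 : ℝ) 1).norm_image_sub_le_of_norm_hasDerivWithin_le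
    (f := fun t : ℝ => q.eval (t : ℂ)) (f' := fun t : ℝ => q.derivative.eval (t : ℂ))
    (C := M / r ^ d / ((1 - r) ^ 2 / 2)) (x := x) (y := y)
    (by
      intro t ht
      exact ((q.hasDerivAt (t : ℂ)).comp_ofReal).hasDerivWithinAt)
    (by
      intro t ht
      have := Complex.norm_deriv_le_of_forall_mem_sphere_norm_le (f := fun z => q.eval z)
        (c := (t : ℂ)) (C := M / r ^ d) hκ q.differentiable.diffContOnCl
        (by
          intro z hz
          apply poly_nbhd_bound q d hq M hM r hr0 hr1 t ht z
          rw [mem_sphere_iff_norm] at hz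
          exact hz.le)
      rwa [Polynomial.deriv] at this) hx hy
  simpa [Real.norm_eq_abs] using key

lemma log_norm_le_circleAverage (g : ℂ → ℂ) (hg : AnalyticOnNhd ℂ g (Metric.closedBall 0 1))
    (h0 : g 0 ≠ 0) : Real.log ‖g 0‖ ≤ Real.circleAverage (fun z => Real.log ‖g z‖) 0 1 := by
  have h := AnalyticOnNhd.circleAverage_log_norm (c := 0) (R := 1) (f := g) one_ne_zero
    (by simpa using hg) h0
  rw [h]
  have : 0 ≤ ∑ᶠ u, (MeromorphicOn.divisor g (Metric.closedBall 0 |(1:ℝ)|) u : ℝ) *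
      Real.log (1 * ‖(0:ℂ) - u‖⁻¹) := by
    apply finsum_nonneg
    intro u
    by_cases hu : u ∈ Metric.closedBall (0:ℂ) |(1:ℝ)|
    · apply mul_nonneg
      · have := MeromorphicOn.AnalyticOnNhd.divisor_nonneg (f := g)
            (U := Metric.closedBall (0:ℂ) |(1:ℝ)|) (by simpa using hg)
        exact_mod_cast this u
      · have hu' : ‖u‖ ≤ 1 := by simpa using hu
        simp only [zero_sub, norm_neg, one_mul, Real.log_inv]
        have := Real.log_nonpos (norm_nonneg u) hu'
        linarith
    · rw [Function.locallyFinsuppWithin.apply_eq_zero_of_notMem _ hu]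
      simp
  linarith

def mob (r : ℝ) (u : ℂ) : ℂ := (u + r) / (1 + r * u)

lemma mob_den (r : ℝ) (hr0 : 0 < r) (hr1 : r < 1) (u : ℂ) (hu : ‖u‖ ≤ 1) :
    1 + (r : ℂ) * u ≠ 0 := by
  intro h
  have h1 : (r : ℂ) * u = -1 := by linear_combination h
  have h2 : r * ‖u‖ = 1 := by
    have := congrArg norm h1
    simpa [abs_of_pos hr0] using this
  nlinarith [norm_nonneg u]

lemma mob_norm (r : ℝ) (hr0 : 0 < r) (hr1 : r < 1) (u : ℂ) (hu : ‖u‖ = 1) : ‖mob r u‖ = 1 := by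
  have hd := mob_den r hr0 hr1 u hu.le
  unfold mob
  rw [norm_div, div_eq_one_iff_eq (norm_ne_zero_iff.mpr hd)]
  have h1 : u * (starRingEnd ℂ) u = 1 := by
    rw [Complex.mul_conj, Complex.normSq_eq_norm_sq, hu]; simp
  have h2 : u + r = u * (starRingEnd ℂ) (1 + r * u) := by
    simp only [map_add, map_one, map_mul, Complex.conj_ofReal]
    linear_combination - r * h1
  rw [h2, norm_mul, hu, RCLike.norm_conj, one_mul]

/-- the boundary parametrisation of `[-1,1]`. -/
def xr (r θ : ℝ) : ℝ := (mob r (circleMap 0 1 θ)).re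

lemma xr_mem (r : ℝ) (hr0 : 0 < r) (hr1 : r < 1) (θ : ℝ) : xr r θ ∈ Set.Icc (-1 : ℝ) 1 := by
  have h := mob_norm r hr0 hr1 (circleMap 0 1 θ) (by simp)
  have := Complex.abs_re_le_norm (mob r (circleMap 0 1 θ))
  rw [h] at this
  exact abs_le.mp this

lemma xr_cont (r : ℝ) (hr0 : 0 < r) (hr1 : r < 1) : Continuous (xr r) := by
  unfold xr mob
  apply Complex.continuous_re.comp
  apply Continuous.div (by fun_prop) (by fun_prop)
  intro θ
  exact mob_den r hr0 hr1 _ (by simp)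

lemma remez1 (q : Polynomial ℂ) (d : ℕ) (hq : q.natDegree ≤ d) (r : ℝ) (hr0 : 0 < r)
    (hr1 : r < 1) (M : ℝ) (hM1 : 1 ≤ M)
    (hM : ∀ x : ℝ, x ∈ Set.Icc (-1 : ℝ) 1 → ‖q.eval (x : ℂ)‖ ≤ M)
    (S : Set ℝ) (hS : MeasurableSet S)
    (hvol : volume (S ∩ Set.Ioc 0 (2 * Real.pi)) ≤ ENNReal.ofReal Real.pi)
    (hN : ∀ θ, θ ∉ S → ‖q.eval (xr r θ : ℂ)‖ ≤ 1) :
    r ^ d * ‖q.eval (((r ^ 2 + 1) / (2 * r) : ℝ) : ℂ)‖ ≤ Real.sqrt M := by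
  set g : ℂ → ℂ := fun u => joukF q d (mob r u) with hg
  have hg0 : ‖g 0‖ = r ^ d * ‖q.eval (((r ^ 2 + 1) / (2 * r) : ℝ) : ℂ)‖ := by
    have : mob r 0 = (r : ℂ) := by simp [mob]
    simp only [hg, this]
    rw [joukF_eq q d hq _ (by exact_mod_cast hr0.ne'), norm_mul, norm_pow]
    simp [abs_of_pos hr0]
  rw [← hg0]
  by_cases h0 : g 0 = 0
  · rw [h0, norm_zero]; positivity
  have hana : AnalyticOnNhd ℂ g (Metric.closedBall 0 1) := by
    intro u hu
    have hu' : ‖u‖ ≤ 1 := by simpa using hu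
    have h1 : AnalyticAt ℂ (mob r) u := by
      unfold mob
      exact AnalyticAt.fun_div (by fun_prop) (by fun_prop) (mob_den r hr0 hr1 u hu')
    exact ((joukF_diff q d).analyticAt (mob r u)).comp h1
  have hJ := log_norm_le_circleAverage g hana h0
  have hgc : ∀ θ, ‖g (circleMap 0 1 θ)‖ = ‖q.eval (xr r θ : ℂ)‖ := by
    intro θ
    simp only [hg]
    rw [joukF_circle q d hq _ (mob_norm r hr0 hr1 _ (by simp))]
    rfl
  have hInt : IntervalIntegrable (fun θ => Real.log ‖g (circleMap 0 1 θ)‖) volume 0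
      (2 * Real.pi) := by
    have := MeromorphicOn.circleIntegrable_log_norm (f := g) (c := 0) (R := 1)
      ((hana.mono (by simpa using Metric.sphere_subset_closedBall)).meromorphicOn)
    exact this
  have hpi : (0 : ℝ) ≤ 2 * Real.pi := by positivity
  have hlogM : 0 ≤ Real.log M := Real.log_nonneg hM1
  have hInt2 : IntegrableOn (S.indicator (fun _ => Real.log M)) (Set.Ioc 0 (2 * Real.pi)) :=
    (integrableOn_const measure_Ioc_lt_top.ne).indicator hS
  have hle : ∫ θ in (0:ℝ)..(2 * Real.pi), Real.log ‖g (circleMap 0 1 θ)‖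
      ≤ Real.pi * Real.log M := by
    rw [intervalIntegral.integral_of_le hpi]
    calc _ ≤ ∫ θ in Set.Ioc 0 (2 * Real.pi), S.indicator (fun _ => Real.log M) θ := by
          apply setIntegral_mono ((intervalIntegrable_iff_integrableOn_Ioc_of_le hpi).mp hInt) hInt2
          intro θ
          simp only [hgc]
          by_cases hθ : θ ∈ S
          · rw [Set.indicator_of_mem hθ]
            rcases eq_or_lt_of_le (norm_nonneg (q.eval (xr r θ : ℂ))) with h | h
            · rw [← h]; simpa using hlogM
            · exact Real.log_le_log h (hM _ (xr_mem r hr0 hr1 θ))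
          · rw [Set.indicator_of_notMem hθ]
            exact Real.log_nonpos (norm_nonneg _) (hN θ hθ)
      _ = (volume (S ∩ Set.Ioc 0 (2 * Real.pi))).toReal * Real.log M := by
          rw [integral_indicator hS, Measure.restrict_restrict hS]
          simp [Measure.real]
      _ ≤ Real.pi * Real.log M := by
          gcongr
          exact ENNReal.toReal_le_of_le_ofReal Real.pi_pos.le hvol
  have hfin : Real.log ‖g 0‖ ≤ Real.log M / 2 := by
    refine hJ.trans ?_
    rw [Real.circleAverage_def, smul_eq_mul]
    have : (2 * Real.pi)⁻¹ * (Real.pi * Real.log M) = Real.log M / 2 := by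
      field_simp
    rw [← this]
    gcongr
  have hM0 : 0 < M := by linarith
  rw [← Real.log_le_log_iff (norm_pos_iff.mpr h0) (Real.sqrt_pos.mpr hM0), Real.log_sqrt hM0.le]
  exact hfin

lemma sqrt_step {p X : ℝ} (hp : 0 < p) (hX : 0 < X) (h : p * X ≤ Real.sqrt X) :
    p * p * X ≤ 1 := by
  have hsq : Real.sqrt X * Real.sqrt X = X := Real.mul_self_sqrt hX.le
  have hs0 : 0 < Real.sqrt X := Real.sqrt_pos.mpr hX
  generalize Real.sqrt X = y at *
  subst hsq
  have h1 : p * y ≤ 1 := le_of_mul_le_mul_right (by linarith : p * y * y ≤ 1 * y) hs0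
  have h2 := mul_le_one₀ h1 (by positivity) h1
  linarith

section General

variable {V : Type*} [NormedAddCommGroup V] [NormedSpace ℝ V]

/-- Functions which are continuous and polynomial of degree at most `d` on real lines. -/
def IsPolyDeg (d : ℕ) (f : V → ℂ) : Prop :=
  Continuous f ∧ ∀ a v : V, ∃ q : Polynomial ℂ, q.natDegree ≤ d ∧
    ∀ t : ℝ, f (a + t • v) = q.eval (t : ℂ)

lemma seg_lip {K : Set V} (hK : Convex ℝ K) {d : ℕ} {f : V → ℂ} (hf : IsPolyDeg d f) {M : ℝ}
    (hM : ∀ z ∈ K, ‖f z‖ ≤ M) {r : ℝ} (hr0 : 0 < r) (hr1 : r < 1) {z b : V} (hz : z ∈ K)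
    (hb : b ∈ K) {τ : ℝ} (h0 : 0 ≤ τ) (h1 : τ ≤ 1) :
    ‖f (z + τ • (b - z)) - f z‖ ≤ M / r ^ d / ((1 - r) ^ 2 / 2) * (2 * τ) := by
  obtain ⟨q, hq, hfq⟩ := hf.2 (z + (1 / 2 : ℝ) • (b - z)) ((1 / 2 : ℝ) • (b - z))
  have hpt : ∀ x : ℝ, z + (1 / 2 : ℝ) • (b - z) + x • (1 / 2 : ℝ) • (b - z)
      = z + ((x + 1) / 2) • (b - z) := by
    intro x
    module
  have hbound : ∀ x : ℝ, x ∈ Set.Icc (-1 : ℝ) 1 → ‖q.eval (x : ℂ)‖ ≤ M := by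
    intro x hx
    rw [← hfq, hpt]
    apply hM
    exact hK.add_smul_sub_mem hz hb ⟨by linarith [hx.1], by linarith [hx.2]⟩
  have h := poly_lipschitz q d hq M hbound r hr0 hr1 (-1) (2 * τ - 1) (by simp)
    ⟨by linarith, by linarith⟩
  rw [← hfq, ← hfq, hpt, hpt] at h
  have e1 : (2 * τ - 1 + 1) / 2 = τ := by ring
  have e2 : ((-1 : ℝ) + 1) / 2 = 0 := by norm_num
  have e3 : |2 * τ - 1 - -1| = 2 * τ := by
    rw [abs_of_nonneg] <;> linarith
  rw [e1, e2, e3, zero_smul, add_zero] at h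
  exact h

lemma lip_K {K : Set V} (hK : Convex ℝ K) {c : V} {r0 : ℝ} (hr : 0 < r0)
    (hB : Metric.closedBall c r0 ⊆ K) {d : ℕ} {f : V → ℂ} (hf : IsPolyDeg d f) {M : ℝ}
    (hM : ∀ z ∈ K, ‖f z‖ ≤ M) {r : ℝ} (hr0 : 0 < r) (hr1 : r < 1) {z z' : V} (hz : z ∈ K)
    (hz' : z' ∈ K) (hzz : ‖z - z'‖ ≤ r0) :
    ‖f z - f z'‖ ≤ M / r ^ d / ((1 - r) ^ 2 / 2) * (4 / r0) * ‖z - z'‖ := by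
  by_cases h0 : z - z' = 0
  · have : z = z' := sub_eq_zero.mp h0
    subst this
    simp
  have hp : 0 < ‖z - z'‖ := norm_pos_iff.mpr h0
  set τ := ‖z - z'‖ / r0 with hτ
  have hτ0 : 0 < τ := by positivity
  have hτ1 : τ ≤ 1 := by rw [hτ, div_le_one hr]; exact hzz
  have hc : c ∈ K := hB (Metric.mem_closedBall_self hr.le)
  set c' := c + ((1 - τ) / τ) • (z - z') with hc'
  have hc'K : c' ∈ K := by
    apply hB
    rw [mem_closedBall_iff_norm, hc', add_sub_cancel_left, norm_smul, Real.norm_eq_abs,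
      abs_of_nonneg (div_nonneg (by linarith) hτ0.le)]
    have : (1 - τ) / τ * ‖z - z'‖ = (1 - τ) * r0 := by
      rw [hτ]; field_simp
    rw [this]
    nlinarith
  have hy : z + τ • (c - z) = z' + τ • (c' - z') := by
    rw [hc']
    have : τ • ((1 - τ) / τ) • (z - z') = (1 - τ) • (z - z') := by
      rw [smul_smul]; congr 1; field_simp
    rw [add_sub_right_comm, smul_add τ (c - z'), this]
    module
  have h1 := seg_lip hK hf hM hr0 hr1 hz hc hτ0.le hτ1
  have h2 := seg_lip hK hf hM hr0 hr1 hz' hc'K hτ0.le hτ1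
  rw [← hy] at h2
  rw [norm_sub_rev] at h1
  have h3 := norm_sub_le_norm_sub_add_norm_sub (f z) (f (z + τ • (c - z))) (f z')
  calc _ ≤ _ := h3
    _ ≤ _ := add_le_add h1 h2
    _ = _ := by rw [hτ]; ring

variable [FiniteDimensional ℝ V] [MeasurableSpace V] [BorelSpace V]

lemma remezK (lam : Measure V) [lam.IsAddHaarMeasure] {K : Set V} (hKc : IsCompact K)
    (hK : Convex ℝ K) (hKi : (interior K).Nonempty) {ε : ℝ} (hε : 0 < ε) :
    ∃ δ : ℝ≥0∞, 0 < δ ∧ ∀ S : Set V, MeasurableSet S → lam S ≤ δ → ∀ (d : ℕ) (f : V → ℂ),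
      IsPolyDeg d f → ∀ N : ℝ, 0 < N → (∀ z ∈ K, z ∉ S → ‖f z‖ ≤ N) →
      ∀ z ∈ K, ‖f z‖ ≤ N * Real.exp (ε * d) := by
  obtain ⟨c, hc⟩ := hKi
  obtain ⟨r0, hr0, hB⟩ := Metric.isOpen_iff.mp isOpen_interior c hc
  have hBK : Metric.ball c r0 ⊆ K := hB.trans interior_subset
  set r : ℝ := Real.exp (-ε / 2) with hrdef
  have hrpos : 0 < r := Real.exp_pos _
  have hr1 : r < 1 := by rw [hrdef, Real.exp_lt_one_iff]; linarith
  set x0 : ℝ := (r ^ 2 + 1) / (2 * r) with hx0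
  have hx01 : 1 < x0 := by
    rw [hx0, lt_div_iff₀ (by positivity)]
    nlinarith [sq_pos_of_pos (sub_pos.mpr hr1)]
  set τ : ℝ → ℝ := fun θ => (x0 - xr r θ) / (x0 + 1) with hτ
  set η : ℝ := (x0 - 1) / (x0 + 1) with hη
  have hη0 : 0 < η := div_pos (by linarith) (by linarith)
  have hτη : ∀ θ, η ≤ τ θ := by
    intro θ
    have := (xr_mem r hrpos hr1 θ).2
    simp only [hη, hτ]
    apply div_le_div_of_nonneg_right _ (by linarith)
    linarith
  have hτcont : Continuous τ := by
    have := xr_cont r hrpos hr1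
    simp only [hτ]
    fun_prop
  set D := Module.finrank ℝ V with hD
  have hBpos : lam (Metric.ball c r0) ≠ 0 := (Metric.measure_ball_pos lam c hr0).ne'
  have hBtop : lam (Metric.ball c r0) ≠ ∞ := measure_ball_lt_top.ne
  have hcη : ENNReal.ofReal ((η ^ D)⁻¹) ≠ 0 := by
    have : 0 < (η ^ D)⁻¹ := by positivity
    simpa using this
  refine ⟨lam (Metric.ball c r0) / (2 * ENNReal.ofReal ((η ^ D)⁻¹)), ?_, ?_⟩
  · apply ENNReal.div_pos hBpos
    exact ENNReal.mul_ne_top (by simp) ENNReal.ofReal_ne_top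
  intro S hS hSδ d f hf N hN hfN
  have hKne : K.Nonempty := ⟨c, interior_subset hc⟩
  obtain ⟨a, haK, hamax⟩ := hKc.exists_isMaxOn hKne (f := fun z => ‖f z‖)
    (hf.1.norm.continuousOn)
  have hmax : ∀ z ∈ K, ‖f z‖ ≤ ‖f a‖ := fun z hz => hamax hz
  suffices hgoal : ‖f a‖ ≤ N * Real.exp (ε * d) from fun z hz => (hmax z hz).trans hgoal
  by_cases hle : ‖f a‖ ≤ N
  · refine hle.trans (le_mul_of_one_le_right hN.le ?_)
    apply Real.one_le_exp
    positivity
  push Not at hle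
  set I : Set ℝ := Set.Ioc 0 (2 * Real.pi) with hI
  set P : V × ℝ → V := fun p => a + τ p.2 • (p.1 - a) with hP
  have hPc : Continuous P := by
    simp only [hP]
    fun_prop
  set U : Set (V × ℝ) := P ⁻¹' S with hU
  have hUm : MeasurableSet U := hPc.measurable hS
  have hslice : ∀ θ, lam ((fun b => (b, θ)) ⁻¹' U) ≤ ENNReal.ofReal ((η ^ D)⁻¹) * lam S := by
    intro θ
    have hτpos : 0 < τ θ := hη0.trans_le (hτη θ)
    have : (fun b => (b, θ)) ⁻¹' U
        = (τ θ • ·) ⁻¹' ((fun y => y + (a - τ θ • a)) ⁻¹' S) := by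
      ext b
      simp only [hU, hP, Set.mem_preimage]
      have : a + τ θ • (b - a) = τ θ • b + (a - τ θ • a) := by module
      rw [this]
    rw [this, Measure.addHaar_preimage_smul lam hτpos.ne', measure_preimage_add_right]
    gcongr
    rw [abs_of_pos (by positivity)]
    gcongr
    exact hτη θ
  have htot : ∫⁻ b in Metric.ball c r0, (volume.restrict I) (Prod.mk b ⁻¹' U) ∂lam
      ≤ ENNReal.ofReal (2 * Real.pi) * (ENNReal.ofReal ((η ^ D)⁻¹) * lam S) := by
    rw [← Measure.prod_apply hUm, Measure.prod_apply_symm hUm]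
    calc _ ≤ ∫⁻ θ in I, ENNReal.ofReal ((η ^ D)⁻¹) * lam S := by
          apply lintegral_mono
          intro θ
          exact (Measure.restrict_apply_le _ _).trans (hslice θ)
      _ = _ := by
          rw [setLIntegral_const, hI, Real.volume_Ioc, sub_zero, mul_comm]
  obtain ⟨b, hbB, hb⟩ := exists_le_setLAverage (μ := lam) (s := Metric.ball c r0)
    (f := fun b => (volume.restrict I) (Prod.mk b ⁻¹' U)) hBpos hBtop
    (measurable_measure_prodMk_left hUm).aemeasurable
  have hb' : (volume.restrict I) (Prod.mk b ⁻¹' U) ≤ ENNReal.ofReal Real.pi := by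
    refine hb.trans ?_
    rw [setLAverage_eq]
    refine ENNReal.div_le_of_le_mul ?_
    refine htot.trans ?_
    have h1 : ENNReal.ofReal ((η ^ D)⁻¹) * lam S ≤ lam (Metric.ball c r0) / 2 := by
      calc _ ≤ ENNReal.ofReal ((η ^ D)⁻¹) *
          (lam (Metric.ball c r0) / (2 * ENNReal.ofReal ((η ^ D)⁻¹))) := by gcongr
        _ = lam (Metric.ball c r0) / 2 := by
          rw [ENNReal.div_eq_inv_mul, ENNReal.div_eq_inv_mul,
            ENNReal.mul_inv (by simp) (by simp), ← mul_assoc, mul_comm, mul_comm (2⁻¹ : ℝ≥0∞),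
            ← mul_assoc (ENNReal.ofReal _), ENNReal.mul_inv_cancel hcη ENNReal.ofReal_ne_top,
            one_mul, mul_comm]
    calc _ ≤ ENNReal.ofReal (2 * Real.pi) * (lam (Metric.ball c r0) / 2) := by gcongr
      _ = _ := by
        rw [ENNReal.ofReal_mul (by norm_num), ENNReal.div_eq_inv_mul, ENNReal.ofReal_ofNat,
          mul_comm (2 : ℝ≥0∞), mul_assoc, ← mul_assoc (2 : ℝ≥0∞),
          ENNReal.mul_inv_cancel (by simp) (by simp), one_mul]
  rw [Measure.restrict_apply (measurable_prodMk_left hUm)] at hb'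
  obtain ⟨q, hq, hfq⟩ := hf.2 (a + (x0 / (x0 + 1)) • (b - a)) ((-(1 / (x0 + 1))) • (b - a))
  have hpt : ∀ x : ℝ, a + (x0 / (x0 + 1)) • (b - a) + x • (-(1 / (x0 + 1))) • (b - a)
      = a + ((x0 - x) / (x0 + 1)) • (b - a) := by
    intro x
    rw [add_assoc, smul_smul, ← add_smul]
    congr 2
    ring
  have hbK : b ∈ K := hBK hbB
  have hin : ∀ x : ℝ, x ∈ Set.Icc (-1 : ℝ) 1 → a + ((x0 - x) / (x0 + 1)) • (b - a) ∈ K := by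
    intro x hx
    apply hK.add_smul_sub_mem haK hbK
    constructor
    · apply div_nonneg <;> linarith [hx.2]
    · rw [div_le_one (by linarith)]; linarith [hx.1]
  have hval : ∀ x : ℝ, ‖(Polynomial.C ((N : ℂ)⁻¹) * q).eval (x : ℂ)‖
      = ‖f (a + ((x0 - x) / (x0 + 1)) • (b - a))‖ / N := by
    intro x
    rw [Polynomial.eval_mul, Polynomial.eval_C, ← hfq, hpt, norm_mul, norm_inv]
    simp [abs_of_pos hN]
    ring
  have hR := remez1 (Polynomial.C ((N : ℂ)⁻¹) * q) d ((Polynomial.natDegree_C_mul_le _ _).trans hq)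
    r hrpos hr1 (‖f a‖ / N) (by rw [le_div_iff₀ hN]; linarith)
    (by
      intro x hx
      rw [hval]
      gcongr
      exact hmax _ (hin x hx))
    (Prod.mk b ⁻¹' U) (measurable_prodMk_left hUm) hb'
    (by
      intro θ hθ
      rw [hval, div_le_one hN]
      exact hfN _ (hin _ (xr_mem r hrpos hr1 θ)) hθ)
  rw [← hx0, hval, sub_self, zero_div, zero_smul, add_zero] at hR
  have hpos : 0 < ‖f a‖ / N := div_pos (hN.trans hle) hN
  have h2 := sqrt_step (pow_pos hrpos d) hpos hR
  have h3 : r ^ d * r ^ d = (Real.exp (ε * d))⁻¹ := by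
    rw [hrdef, ← Real.exp_nat_mul, ← Real.exp_add, ← Real.exp_neg]
    congr 1
    ring
  rw [h3, inv_mul_le_iff₀ (Real.exp_pos _), mul_one, div_le_iff₀ hN] at h2
  linarith

end General

section General2

variable {V : Type*} [NormedAddCommGroup V] [NormedSpace ℝ V]
  [FiniteDimensional ℝ V] [MeasurableSpace V] [BorelSpace V]

lemma density_set (lam : Measure V) [lam.IsAddHaarMeasure] {K : Set V} (hKc : IsCompact K)
    (hK : Convex ℝ K) (ν : Measure V) [IsFiniteMeasure ν] {T : ℝ}
    (hν : ∀ z ∈ interior K, ∃ r0 > 0, ∀ r : ℝ, 0 < r → r < r0 →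
      ENNReal.ofReal (r ^ T) ≤ ν (Metric.ball z r)) {δ : ℝ≥0∞} (hδ : 0 < δ) :
    ∃ k : ℕ, ∃ A : Set V, MeasurableSet A ∧ lam (K \ A) ≤ δ ∧ ∀ z ∈ A, ∀ m : ℕ, k ≤ m →
      ENNReal.ofReal ((1 / ((m : ℝ) + 1)) ^ T) ≤ ν.restrict K (Metric.ball z (1 / ((m : ℝ) + 1))) := by
  have hmeas : ∀ ρ : ℝ, Measurable fun z : V => ν.restrict K (Metric.ball z ρ) := by
    intro ρ
    have hU : MeasurableSet {p : V × V | dist p.2 p.1 < ρ} := by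
      apply IsOpen.measurableSet
      exact isOpen_lt (by fun_prop) continuous_const
    exact measurable_measure_prodMk_left (ν := ν.restrict K) hU
  set A : ℕ → Set V := fun k => {z | ∀ m : ℕ, k ≤ m →
      ENNReal.ofReal ((1 / ((m : ℝ) + 1)) ^ T) ≤ ν.restrict K (Metric.ball z (1 / ((m : ℝ) + 1)))}
    with hA
  have hAm : ∀ k, MeasurableSet (A k) := by
    intro k
    have : A k = ⋂ m : ℕ, ⋂ _ : k ≤ m, {z | ENNReal.ofReal ((1 / ((m : ℝ) + 1)) ^ T) ≤
        ν.restrict K (Metric.ball z (1 / ((m : ℝ) + 1)))} := by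
      ext z; simp [hA]
    rw [this]
    refine MeasurableSet.iInter fun m => MeasurableSet.iInter fun _ => ?_
    exact measurableSet_le measurable_const (hmeas _)
  have hanti : Antitone fun k => K \ A k := by
    intro k l hkl
    apply Set.sdiff_subset_sdiff_right
    intro z hz m hm
    exact hz m (hkl.trans hm)
  have hKm : MeasurableSet K := hKc.isClosed.measurableSet
  have hlim := tendsto_measure_iInter_atTop (μ := lam) (s := fun k => K \ A k)
    (fun k => (hKm.diff (hAm k)).nullMeasurableSet) hanti
    ⟨0, ((measure_mono Set.sdiff_subset).trans_lt hKc.measure_lt_top).ne⟩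
  have hzero : lam (⋂ k, K \ A k) = 0 := by
    refine measure_mono_null ?_ (hK.addHaar_frontier lam)
    intro z hz
    rw [Set.mem_iInter] at hz
    refine ⟨subset_closure (hz 0).1, ?_⟩
    intro hzi
    obtain ⟨r0, hr0, h⟩ := hν z hzi
    obtain ⟨r1, hr1, hb⟩ := Metric.isOpen_iff.mp isOpen_interior z hzi
    obtain ⟨k, hk⟩ := exists_nat_one_div_lt (lt_min hr0 hr1)
    apply (hz k).2
    intro m hm
    have hm' : 1 / ((m : ℝ) + 1) < min r0 r1 := by
      refine lt_of_le_of_lt ?_ hk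
      gcongr
    rw [Measure.restrict_apply Metric.isOpen_ball.measurableSet, Set.inter_eq_left.mpr]
    · exact h _ (by positivity) (hm'.trans_le (min_le_left _ _))
    · exact (Metric.ball_subset_ball (hm'.le.trans (min_le_right _ _))).trans
        (hb.trans interior_subset)
  rw [hzero] at hlim
  obtain ⟨k, hk⟩ := (hlim.eventually_lt_const hδ).exists
  exact ⟨k, A k, hAm k, hk.le, fun z hz => hz⟩

lemma bmK (lam : Measure V) [lam.IsAddHaarMeasure] {K : Set V} (hKc : IsCompact K)
    (hK : Convex ℝ K) (hKi : (interior K).Nonempty) (ν : Measure V) [IsFiniteMeasure ν] {T : ℝ}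
    (hT : 0 < T)
    (hν : ∀ z ∈ interior K, ∃ r0 > 0, ∀ r : ℝ, 0 < r → r < r0 →
      ENNReal.ofReal (r ^ T) ≤ ν (Metric.ball z r)) {ε : ℝ} (hε : 0 < ε) :
    ∃ C : ℝ, 0 < C ∧ ∀ (d : ℕ) (f : V → ℂ), IsPolyDeg d f → ∀ z ∈ K,
      ENNReal.ofReal (C * Real.exp (-(ε * d)) * ‖f z‖ ^ 2) ≤
        ∫⁻ y in K, ENNReal.ofReal (‖f y‖ ^ 2) ∂ν := by
  have hKm : MeasurableSet K := hKc.isClosed.measurableSet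
  set e : ℝ := ε / (2 + 2 * T) with he
  have he0 : 0 < e := by positivity
  obtain ⟨δ, hδ, hrem⟩ := remezK lam hKc hK hKi he0
  obtain ⟨k, A, hAm, hAδ, hA⟩ := density_set lam hKc hK ν hν hδ
  obtain ⟨c, hc⟩ := hKi
  obtain ⟨r1, hr1, hB1⟩ := Metric.isOpen_iff.mp isOpen_interior c hc
  set r0 : ℝ := r1 / 2 with hr0def
  have hr0 : 0 < r0 := by positivity
  have hB : Metric.closedBall c r0 ⊆ K :=
    ((Metric.closedBall_subset_ball (by rw [hr0def]; linarith)).trans hB1).trans interior_subset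
  set r : ℝ := Real.exp (-e) with hrdef
  have hrpos : 0 < r := Real.exp_pos _
  have hrlt : r < 1 := by rw [hrdef, Real.exp_lt_one_iff]; linarith
  set C1 : ℝ := 1 / ((1 - r) ^ 2 / 2) * (4 / r0) with hC1
  have h1r : 0 < 1 - r := by linarith
  have hC1p : 0 < C1 := by positivity
  set C2 : ℝ := 4 * C1 + k + 1 / r0 with hC2
  have hC2p : 0 < C2 := by positivity
  refine ⟨1 / 16 * (1 / (C2 + 2)) ^ T, by positivity, ?_⟩
  intro d f hf
  obtain ⟨a, haK, hamax⟩ := hKc.exists_isMaxOn ⟨c, interior_subset hc⟩ (f := fun z => ‖f z‖)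
    (hf.1.norm.continuousOn)
  have hmax : ∀ z ∈ K, ‖f z‖ ≤ ‖f a‖ := fun z hz => hamax hz
  set M := ‖f a‖ with hM
  suffices hgoal : ENNReal.ofReal (1 / 16 * (1 / (C2 + 2)) ^ T * Real.exp (-(ε * d)) * M ^ 2) ≤
        ∫⁻ y in K, ENNReal.ofReal (‖f y‖ ^ 2) ∂ν by
    intro z hz
    refine le_trans (ENNReal.ofReal_le_ofReal ?_) hgoal
    gcongr
    exact hmax z hz
  rcases (norm_nonneg (f a)).eq_or_lt with h0 | hMp
  · rw [← hM] at h0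
    rw [← h0]
    simp
  rw [← hM] at hMp
  set X : ℝ := Real.exp (e * d) with hX
  have hX1 : 1 ≤ X := Real.one_le_exp (by positivity)
  have hXp : 0 < X := by linarith
  obtain ⟨z, hzK, hzA, hz⟩ : ∃ z ∈ K, z ∈ A ∧ M / 2 / X < ‖f z‖ := by
    by_contra! hcon
    have := hrem (K \ A) (hKm.diff hAm) hAδ d f hf (M / 2 / X) (by positivity)
      (by
        intro z hz hz'
        exact hcon z hz (by by_contra h; exact hz' ⟨hz, h⟩)) a haK
    rw [← hX, div_mul_cancel₀ _ hXp.ne'] at this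
    linarith
  set m : ℕ := ⌈C2 * X ^ 2⌉₊ with hm
  have hX2 : 1 ≤ X ^ 2 := one_le_pow₀ hX1
  have hm1 : C2 * X ^ 2 ≤ m := Nat.le_ceil _
  have hm2 : (m : ℝ) + 1 ≤ (C2 + 2) * X ^ 2 := by
    have := (Nat.ceil_lt_add_one (by positivity : 0 ≤ C2 * X ^ 2)).le
    rw [← hm] at this
    nlinarith
  have hmC2 : C2 ≤ m := le_trans (le_mul_of_one_le_right hC2p.le hX2) hm1
  have hkm : k ≤ m := by
    have : (k : ℝ) ≤ m := by
      refine le_trans ?_ hmC2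
      have : 0 < 1 / r0 := by positivity
      linarith
    exact_mod_cast this
  set ρ : ℝ := 1 / ((m : ℝ) + 1) with hρ
  have hρ0 : 0 < ρ := by positivity
  have hρr : ρ ≤ r0 := by
    rw [hρ, one_div_le (by positivity) hr0]
    have : (0 : ℝ) ≤ k := by positivity
    linarith
  have hρL : C1 * X * ρ ≤ 1 / 4 / X := by
    rw [hρ, mul_one_div, div_le_div_iff₀ (by positivity) hXp]
    have : (0 : ℝ) ≤ k := by positivity
    have h2 : 0 < 1 / r0 := by positivity
    have : 4 * C1 * X ^ 2 ≤ C2 * X ^ 2 := by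
      gcongr
      linarith
    nlinarith
  have hlow : ∀ y ∈ Metric.ball z ρ ∩ K, M / 4 / X ≤ ‖f y‖ := by
    rintro y ⟨hy, hyK⟩
    have hyz : ‖y - z‖ < ρ := by rwa [Metric.mem_ball, dist_eq_norm] at hy
    have h1 := lip_K hK hr0 hB hf hmax hrpos hrlt hyK hzK (hyz.le.trans hρr)
    have hrX : M / r ^ d = M * X := by
      rw [hrdef, ← Real.exp_nat_mul, hX, div_eq_mul_inv, ← Real.exp_neg]
      congr 2
      ring
    have h2 : ‖f y - f z‖ ≤ M / 4 / X := by
      calc _ ≤ _ := h1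
        _ = M * (C1 * X * ‖y - z‖) := by rw [hrX, hC1]; ring
        _ ≤ M * (C1 * X * ρ) := by gcongr
        _ ≤ M * (1 / 4 / X) := by gcongr
        _ = _ := by ring
    have h3 : ‖f z‖ ≤ ‖f y‖ + ‖f y - f z‖ := by
      have := norm_sub_le (f y) (f y - f z)
      rwa [_root_.sub_sub_cancel] at this
    have h4 : M / 2 / X = M / 4 / X + M / 4 / X := by ring
    linarith
  have hνb := hA z hzA m hkm
  rw [← hρ, Measure.restrict_apply Metric.isOpen_ball.measurableSet] at hνb
  have hkey : 1 / 16 * (1 / (C2 + 2)) ^ T * Real.exp (-(ε * d)) * M ^ 2 ≤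
      (M / 4 / X) ^ 2 * ρ ^ T := by
    have h1 : 1 / ((C2 + 2) * X ^ 2) ≤ ρ := by
      rw [hρ]; gcongr
    have h2 : (1 / (C2 + 2)) ^ T * Real.exp (-(2 * e * T * d)) ≤ ρ ^ T := by
      refine le_trans (le_of_eq ?_) (Real.rpow_le_rpow (by positivity) h1 hT.le)
      have : 1 / ((C2 + 2) * X ^ 2) = (1 / (C2 + 2)) * Real.exp (-(2 * e * d)) := by
        rw [hX, ← Real.exp_nat_mul, Real.exp_neg]
        rw [one_div, one_div, mul_inv]
        congr 3
        push_cast; ring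
      rw [this, Real.mul_rpow (by positivity) (by positivity), ← Real.exp_mul]
      congr 2
      ring
    have h3 : (M / 4 / X) ^ 2 = 1 / 16 * M ^ 2 * Real.exp (-(2 * e * d)) := by
      have : Real.exp (-(2 * e * d)) = (X ^ 2)⁻¹ := by
        rw [hX, ← Real.exp_nat_mul, ← Real.exp_neg]
        congr 2
        push_cast; ring
      rw [this]
      field_simp
      norm_num
    have h4 : Real.exp (-(ε * d)) = Real.exp (-(2 * e * d)) * Real.exp (-(2 * e * T * d)) := by
      rw [← Real.exp_add]
      congr 1
      rw [he]
      field_simp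
      ring
    rw [h3, h4]
    calc _ = 1 / 16 * M ^ 2 * Real.exp (-(2 * e * d)) *
          ((1 / (C2 + 2)) ^ T * Real.exp (-(2 * e * T * d))) := by ring
      _ ≤ _ := by gcongr
  calc _ ≤ ENNReal.ofReal ((M / 4 / X) ^ 2 * ρ ^ T) := ENNReal.ofReal_le_ofReal hkey
    _ = ENNReal.ofReal ((M / 4 / X) ^ 2) * ENNReal.ofReal (ρ ^ T) :=
        ENNReal.ofReal_mul (by positivity)
    _ ≤ ENNReal.ofReal ((M / 4 / X) ^ 2) * ν (Metric.ball z ρ ∩ K) := by gcongr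
    _ = ∫⁻ y in Metric.ball z ρ ∩ K, ENNReal.ofReal ((M / 4 / X) ^ 2) ∂ν := by
        rw [setLIntegral_const]
    _ ≤ ∫⁻ y in Metric.ball z ρ ∩ K, ENNReal.ofReal (‖f y‖ ^ 2) ∂ν := by
        refine setLIntegral_mono' (Metric.isOpen_ball.measurableSet.inter hKm) ?_
        intro y hy
        apply ENNReal.ofReal_le_ofReal
        gcongr
        exact hlow y hy
    _ ≤ _ := lintegral_mono_set Set.inter_subset_right

end General2

lemma bmH {n : ℕ} {H : Set (Pt n)} (hHc : IsCompact H) (hH : Convex ℝ H)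
    (hHi : (interior H).Nonempty) {ν : Measure H} (hν : ν Set.univ ≤ 1) (hdens : DensityCond H ν)
    {ρ ε : ℝ} (hρ : 0 < ρ) (hε : 0 < ε) :
    ∃ d0 : ℕ, ∀ d : ℕ, d0 ≤ d → ∀ f : Pt n → ℂ, IsPolyDeg d f → ∀ a : H,
      ENNReal.ofReal (Real.exp (-(ε * d))) * ENNReal.ofReal (‖f a‖ ^ 2) ≤
        ∫⁻ y in Metric.ball a ρ, ENNReal.ofReal (‖f (y : Pt n)‖ ^ 2) ∂ν := by
  have hfd : FiniteDimensional ℝ (Pt n) := inferInstance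
  have hfin : IsFiniteMeasure ν := ⟨hν.trans_lt one_lt_top⟩
  obtain ⟨T, hT, hdens⟩ := hdens
  obtain ⟨t, htH, htf, hcov⟩ := Metric.finite_approx_of_totallyBounded hHc.totallyBounded (ρ / 3) (by positivity)
  set ν' : Measure (Pt n) := ν.map Subtype.val with hν'
  have hKC : ∀ x ∈ t, ∃ C : ℝ, 0 < C ∧ ∀ (d : ℕ) (f : Pt n → ℂ), IsPolyDeg d f →
      ∀ z ∈ H ∩ Metric.closedBall x (ρ / 3),
      ENNReal.ofReal (C * Real.exp (-(ε / 2 * d)) * ‖f z‖ ^ 2) ≤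
        ∫⁻ y in H ∩ Metric.closedBall x (ρ / 3), ENNReal.ofReal (‖f y‖ ^ 2) ∂ν' := by
    intro x hx
    refine bmK (Measure.addHaar) (hHc.inter_right Metric.isClosed_closedBall)
      (hH.inter (convex_closedBall _ _)) ?_ ν' hT ?_ (by positivity)
    · have hxc : x ∈ closure (interior H) := by
        rw [hH.closure_interior_eq_closure_of_nonempty_interior hHi]
        exact subset_closure (htH hx)
      rw [mem_closure_iff] at hxc
      obtain ⟨y, hy1, hy2⟩ := hxc _ Metric.isOpen_ball (Metric.mem_ball_self (by positivity : 0 < ρ / 3))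
      refine ⟨y, ?_⟩
      rw [interior_inter]
      exact ⟨hy2, interior_mono Metric.ball_subset_closedBall
        (by rwa [Metric.isOpen_ball.interior_eq])⟩
    · intro z hz
      have hzH : z ∈ H := (interior_subset hz).1
      obtain ⟨r0, hr0, h⟩ := hdens ⟨z, hzH⟩
      refine ⟨r0, hr0, fun r hr hr' => ?_⟩
      rw [hν', Measure.map_apply measurable_subtype_coe Metric.isOpen_ball.measurableSet]
      exact h r hr hr'
  choose! C hC0 hC using hKC
  have hev : ∀ᶠ d : ℕ in atTop, ∀ x ∈ t, Real.exp (-(ε / 2 * d)) ≤ C x := by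
    rw [eventually_all_finite htf]
    intro x hx
    have hl : Tendsto (fun d : ℕ => Real.exp (-(ε / 2 * d))) atTop (𝓝 0) := by
      apply Real.tendsto_exp_neg_atTop_nhds_zero.comp
      exact tendsto_natCast_atTop_atTop.const_mul_atTop (by positivity)
    exact (hl.eventually_lt_const (hC0 x hx)).mono fun d hd => hd.le
  obtain ⟨d0, hd0⟩ := eventually_atTop.mp hev
  refine ⟨d0, fun d hd f hf a => ?_⟩
  obtain ⟨x, hx, hax⟩ := Set.mem_iUnion₂.mp (hcov a.2)
  have hmem : (a : Pt n) ∈ H ∩ Metric.closedBall x (ρ / 3) :=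
    ⟨a.2, Metric.ball_subset_closedBall hax⟩
  have h1 := hC x hx d f hf a hmem
  have hfm : Measurable fun y : Pt n => ENNReal.ofReal (‖f y‖ ^ 2) :=
    (ENNReal.continuous_ofReal.comp (hf.1.norm.pow 2)).measurable
  rw [hν', setLIntegral_map
    (hHc.inter_right Metric.isClosed_closedBall).isClosed.measurableSet hfm
    measurable_subtype_coe] at h1
  rw [← ENNReal.ofReal_mul (Real.exp_pos _).le]
  refine le_trans (ENNReal.ofReal_le_ofReal ?_) (h1.trans (lintegral_mono_set ?_))
  · have : Real.exp (-(ε * d)) = Real.exp (-(ε / 2 * d)) * Real.exp (-(ε / 2 * d)) := by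
      rw [← Real.exp_add]; congr 1; ring
    rw [this]
    gcongr
    exact hd0 d hd x hx
  · intro y hy
    have hy2 : dist (y : Pt n) x ≤ ρ / 3 := hy.2
    have ha2 : dist (a : Pt n) x ≤ ρ / 3 := hmem.2
    rw [Metric.mem_ball, Subtype.dist_eq]
    have := dist_triangle_right (y : Pt n) a x
    linarith

lemma isPolyDeg_mono {n d : ℕ} (e : Fin n → ℕ) (he : ∑ k, e k ≤ d) :
    IsPolyDeg d (fun y : Pt n => ∏ k, (y k) ^ (e k)) := by
  constructor
  · fun_prop
  · intro a v
    refine ⟨∏ k, (Polynomial.C (a k) + Polynomial.C (v k) * Polynomial.X) ^ (e k), ?_, ?_⟩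
    · refine (Polynomial.natDegree_prod_le _ _).trans (le_trans ?_ he)
      apply Finset.sum_le_sum
      intro k _
      refine Polynomial.natDegree_pow_le.trans ?_
      refine (Nat.mul_le_mul_left _ ?_).trans (mul_one _).le
      compute_degree
    · intro t
      simp only [Polynomial.eval_prod, Polynomial.eval_pow, Polynomial.eval_add, Polynomial.eval_mul,
        Polynomial.eval_C, Polynomial.eval_X, PiLp.add_apply, PiLp.smul_apply, Complex.real_smul]
      refine Finset.prod_congr rfl fun k _ => ?_
      ring

lemma isPolyDeg_sum {n d : ℕ} {ι : Type*} (s : Finset ι) (c : ι → ℂ) (g : ι → Pt n → ℂ)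
    (hg : ∀ i, IsPolyDeg d (g i)) : IsPolyDeg d (fun y => ∑ i ∈ s, c i * g i y) := by
  constructor
  · have := fun i => (hg i).1
    fun_prop
  · intro a v
    choose q hq hq' using fun i => (hg i).2 a v
    refine ⟨∑ i ∈ s, Polynomial.C (c i) * q i, ?_, ?_⟩
    · apply Polynomial.natDegree_sum_le_of_forall_le
      intro i _
      exact (Polynomial.natDegree_C_mul_le _ _).trans (hq i)
    · intro t
      rw [Polynomial.eval_finsetSum]
      apply Finset.sum_congr rfl
      intro i _
      rw [hq' i, Polynomial.eval_mul, Polynomial.eval_C]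

lemma isPolyDeg_VDM {n d : ℕ} {E : Fin (sdim n d) → (Fin n → ℕ)} (hE : IsEnum n d E)
    (x : Fin (sdim n d) → Pt n) (j : Fin (sdim n d)) :
    IsPolyDeg d (fun y : Pt n => VDM n d E (Function.update x j y)) := by
  set A : Matrix (Fin (sdim n d)) (Fin (sdim n d)) ℂ :=
    Matrix.of fun i j => ∏ k, (x j k) ^ (E i k) with hA
  have h : (fun y : Pt n => VDM n d E (Function.update x j y)) =
      fun y => ∑ i, A.adjugate j i * ∏ k, (y k) ^ (E i k) := by
    funext y
    have h1 : VDM n d E (Function.update x j y) = A.cramer (fun i => ∏ k, (y k) ^ (E i k)) j := by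
      rw [Matrix.cramer_apply, VDM]
      congr 1
      ext i l
      by_cases hl : l = j
      · subst hl; simp
      · simp [hl, hA]
    rw [h1, Matrix.cramer_eq_adjugate_mulVec]
    rfl
  rw [h]
  apply isPolyDeg_sum
  intro i
  exact isPolyDeg_mono _ (((hE.2 (E i)).mpr ⟨i, rfl⟩))

lemma VDM_cont {n d : ℕ} (E : Fin (sdim n d) → (Fin n → ℕ)) : Continuous (VDM n d E) := by
  unfold VDM
  apply Continuous.matrix_det
  refine continuous_matrix fun i j => ?_
  simp only [Matrix.of_apply]
  fun_prop

lemma fubini_lower {ι X : Type*} [Fintype ι] [DecidableEq ι] [MeasurableSpace X]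
    (ν : Measure X) [IsFiniteMeasure ν] (B : ι → Set X) (F : (ι → X) → ℝ≥0∞)
    (hF : Measurable F) (c : ℝ≥0∞) (a : ι → X)
    (h : ∀ (i : ι) (x : ι → X), x i = a i →
      c * F x ≤ ∫⁻ y in B i, F (Function.update x i y) ∂ν) :
    c ^ Fintype.card ι * F a ≤ ∫⁻ x in Set.pi Set.univ B, F x ∂(Measure.pi fun _ => ν) := by
  rw [Measure.restrict_pi_pi, lintegral_eq_lmarginal_univ a]
  have key : ∀ (S : Finset ι) (x : ι → X), (∀ i ∈ S, x i = a i) →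
      c ^ S.card * F x ≤ (∫⋯∫⁻_S, F ∂(fun i => ν.restrict (B i))) x := by
    intro S
    induction S using Finset.induction_on with
    | empty => intro x _; simp
    | insert i S hi ih =>
      intro x hx
      rw [lmarginal_insert _ hF hi, Finset.card_insert_of_notMem hi]
      calc c ^ (S.card + 1) * F x = c ^ S.card * (c * F x) := by rw [pow_succ, mul_assoc]
        _ ≤ c ^ S.card * ∫⁻ y in B i, F (Function.update x i y) ∂ν := by
            gcongr
            exact h i x (hx i (Finset.mem_insert_self _ _))
        _ = ∫⁻ y in B i, c ^ S.card * F (Function.update x i y) ∂ν := by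
            rw [lintegral_const_mul]
            exact hF.comp (measurable_update x)
        _ ≤ _ := by
            apply lintegral_mono
            intro y
            apply ih
            intro j hj
            have : j ≠ i := fun e => hi (e ▸ hj)
            rw [Function.update_of_ne this]
            exact hx j (Finset.mem_insert_of_mem hj)
  have := key Finset.univ a (fun _ _ => rfl)
  rwa [Finset.card_univ] at this

lemma emp_apply' {X : Type*} [MeasurableSpace X] {s : ℕ} (a : Fin s → X) {B : Set X}
    (hB : MeasurableSet B) : emp a B = (s : ℝ≥0∞)⁻¹ * ∑ j, B.indicator 1 (a j) := by
  simp [emp, Measure.smul_apply, Measure.dirac_apply' _ hB]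

lemma emp_thick {X : Type*} [PseudoMetricSpace X] [MeasurableSpace X] [BorelSpace X] {s : ℕ}
    (a b : Fin s → X) {ρ : ℝ} (hab : ∀ j, dist (a j) (b j) < ρ) {B : Set X}
    (hB : MeasurableSet B) : emp a B ≤ emp b (Metric.thickening ρ B) := by
  rw [emp_apply' a hB, emp_apply' b Metric.isOpen_thickening.measurableSet]
  gcongr with j
  by_cases hj : a j ∈ B
  · have : b j ∈ Metric.thickening ρ B :=
      Metric.mem_thickening_iff.mpr ⟨a j, hj, by rw [dist_comm]; exact hab j⟩
    simp [hj, this]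
  · simp [hj]

lemma emp_LP {X : Type*} [PseudoMetricSpace X] [MeasurableSpace X] [BorelSpace X] {s : ℕ}
    (hs : s ≠ 0) (a b : Fin s → X) {ρ : ℝ} (hρ : 0 < ρ) (hab : ∀ j, dist (a j) (b j) < ρ) :
    dist (LevyProkhorov.ofMeasure (empPM hs a)) (LevyProkhorov.ofMeasure (empPM hs b)) ≤ ρ := by
  rw [LevyProkhorov.dist_probabilityMeasure_def, levyProkhorovDist]
  apply ENNReal.toReal_le_of_le_ofReal hρ.le
  apply levyProkhorovEDist_le_of_forall
  intro ε B h1 h2 hB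
  have hρε : ρ ≤ ε.toReal := by
    rw [← ENNReal.ofReal_le_iff_le_toReal h2.ne]; exact h1.le
  constructor
  · refine le_trans ((emp_thick a b hab hB).trans ?_) le_self_add
    exact measure_mono (Metric.thickening_mono hρε B)
  · refine le_trans ((emp_thick b a (fun j => by rw [dist_comm]; exact hab j) hB).trans ?_)
      le_self_add
    exact measure_mono (Metric.thickening_mono hρε B)

lemma nbhd_shrink {X : Type*} [PseudoMetricSpace X] [SecondCountableTopology X]
    [MeasurableSpace X] [BorelSpace X] (μ : ProbabilityMeasure X)
    {G : Set (ProbabilityMeasure X)} (hG : IsOpen G) (hμ : μ ∈ G) :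
    ∃ G' : Set (ProbabilityMeasure X), IsOpen G' ∧ μ ∈ G' ∧ ∃ ρ : ℝ, 0 < ρ ∧
      ∀ (s : ℕ) (hs : s ≠ 0) (a b : Fin s → X), (∀ j, dist (a j) (b j) < ρ) →
        empPM hs a ∈ G' → empPM hs b ∈ G := by
  have hc1 := LevyProkhorov.continuous_toMeasure_probabilityMeasure (Ω := X)
  have hc2 := LevyProkhorov.continuous_ofMeasure_probabilityMeasure (Ω := X)
  have hO := hG.preimage hc1
  obtain ⟨r, hr, hb⟩ := Metric.isOpen_iff.mp hO (LevyProkhorov.ofMeasure μ) hμ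
  refine ⟨_, (Metric.isOpen_ball (x := LevyProkhorov.ofMeasure μ) (ε := r / 2)).preimage hc2,
    Metric.mem_ball_self (by positivity), r / 2, by positivity, ?_⟩
  intro s hs a b hab ha
  have h1 := emp_LP hs a b (by positivity) hab
  have h2 : dist (LevyProkhorov.ofMeasure (empPM hs a)) (LevyProkhorov.ofMeasure μ) < r / 2 := ha
  have h3 : LevyProkhorov.ofMeasure (empPM hs b) ∈ Metric.ball (LevyProkhorov.ofMeasure μ) r := by
    rw [Metric.mem_ball]
    have := dist_triangle_left (LevyProkhorov.ofMeasure (empPM hs b)) (LevyProkhorov.ofMeasure μ)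
      (LevyProkhorov.ofMeasure (empPM hs a))
    linarith
  exact hb h3

lemma absVDMQ_zero {n d : ℕ} (E : Fin (sdim n d) → (Fin n → ℕ)) (H : Set (Pt n))
    (a : Fin (sdim n d) → H) :
    absVDMQ n d E H 0 a = ENNReal.ofReal ‖VDM n d E (fun j => (a j : Pt n))‖ := by
  simp [absVDMQ]

lemma absVDMQ_meas {n d : ℕ} (E : Fin (sdim n d) → (Fin n → ℕ)) (H : Set (Pt n)) :
    Measurable (fun a => absVDMQ n d E H 0 a ^ 2) := by
  simp only [absVDMQ_zero]
  apply Continuous.measurable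
  have h1 : Continuous fun a : Fin (sdim n d) → H => VDM n d E (fun j => (a j : Pt n)) :=
    (VDM_cont E).comp (by fun_prop)
  exact (ENNReal.continuous_pow 2).comp (ENNReal.continuous_ofReal.comp h1.norm)

lemma Jd_le_Wd {n d : ℕ} (hd : 1 ≤ d) (E : Fin (sdim n d) → (Fin n → ℕ)) (H : Set (Pt n))
    (ν : Measure H) (hν : ν Set.univ ≤ 1) (G : Set (ProbabilityMeasure H)) :
    Jd n d E H ν 0 G ≤ Wd n d E H 0 G := by
  have hfin : IsFiniteMeasure ν := ⟨hν.trans_lt one_lt_top⟩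
  have hp : (0 : ℝ) < d * sdim n d := by
    have := sdim_pos n d
    positivity
  set p : ℝ := d * sdim n d with hpdef
  set W := Wd n d E H 0 G with hW
  have hF : ∀ a ∈ Gtilde d H G, absVDMQ n d E H 0 a ≤ W ^ p := by
    intro a ha
    have h1 : absVDMQ n d E H 0 a ^ (1 / p) ≤ W := by
      rw [hW, Wd]
      exact le_iSup₂ (f := fun a (_ : a ∈ Gtilde d H G) => absVDMQ n d E H 0 a ^ (1 / p)) a ha
    rwa [one_div, ENNReal.rpow_inv_le_iff hp] at h1
  set c : ℝ≥0∞ := (W ^ p) ^ 2 with hc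
  have hsub : Gtilde d H G ⊆ {a | absVDMQ n d E H 0 a ^ 2 ≤ c} := by
    intro a ha
    exact pow_le_pow_left' (hF a ha) 2
  have hm : MeasurableSet {a | absVDMQ n d E H 0 a ^ 2 ≤ c} :=
    measurableSet_le (absVDMQ_meas E H) measurable_const
  have hInt : ∫⁻ a in Gtilde d H G, (absVDMQ n d E H 0 a) ^ 2
      ∂(Measure.pi fun _ : Fin (sdim n d) => ν) ≤ c := by
    calc _ ≤ ∫⁻ a in {a | absVDMQ n d E H 0 a ^ 2 ≤ c}, (absVDMQ n d E H 0 a) ^ 2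
          ∂(Measure.pi fun _ : Fin (sdim n d) => ν) := lintegral_mono_set hsub
      _ ≤ ∫⁻ a in {a | absVDMQ n d E H 0 a ^ 2 ≤ c}, c
          ∂(Measure.pi fun _ : Fin (sdim n d) => ν) := setLIntegral_mono' hm fun a ha => ha
      _ = c * (Measure.pi fun _ : Fin (sdim n d) => ν) {a | absVDMQ n d E H 0 a ^ 2 ≤ c} :=
          setLIntegral_const _ _
      _ ≤ c * 1 := by
          gcongr
          refine (measure_mono (Set.subset_univ _)).trans ?_
          rw [Measure.pi_univ]
          exact Finset.prod_le_one' fun _ _ => hν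
      _ = c := mul_one c
  rw [Jd]
  refine (ENNReal.rpow_le_rpow hInt (by positivity)).trans (le_of_eq ?_)
  rw [hc, ← ENNReal.rpow_natCast, ← ENNReal.rpow_mul, ← ENNReal.rpow_mul]
  have : p * ((2 : ℕ) * (1 / (2 * d * sdim n d))) = 1 := by
    rw [mul_assoc (2 : ℝ), ← hpdef]
    push_cast
    field_simp
  rw [this, ENNReal.rpow_one]

lemma Wd_le_Jd {n : ℕ} (E : ∀ d, Fin (sdim n d) → (Fin n → ℕ)) (hE : ∀ d, IsEnum n d (E d))
    {H : Set (Pt n)} (hHc : IsCompact H) (hH : Convex ℝ H)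
    (hHi : (interior H).Nonempty) {ν : Measure H} (hν : ν Set.univ ≤ 1) (hdens : DensityCond H ν)
    {ρ ε : ℝ} (hρ : 0 < ρ) (hε : 0 < ε) {G G' : Set (ProbabilityMeasure H)}
    (hG : ∀ (s : ℕ) (hs : s ≠ 0) (a b : Fin s → H), (∀ j, dist (a j) (b j) < ρ) →
        empPM hs a ∈ G' → empPM hs b ∈ G) :
    ∀ᶠ d in atTop, ENNReal.ofReal (Real.exp (-ε)) * Wd n d (E d) H 0 G' ≤
      Jd n d (E d) H ν 0 G := by
  have hfin : IsFiniteMeasure ν := ⟨hν.trans_lt one_lt_top⟩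
  obtain ⟨d0, hd0⟩ := bmH hHc hH hHi hν hdens hρ (by positivity : 0 < 2 * ε)
  filter_upwards [eventually_ge_atTop d0, eventually_ge_atTop 1] with d hd hd1
  have hs := sdim_pos n d
  have hp : (0 : ℝ) < d * sdim n d := by positivity
  set p : ℝ := d * sdim n d with hpdef
  rw [Wd]
  simp only [ENNReal.mul_iSup]
  refine iSup₂_le fun a ha => ?_
  have h1 := fubini_lower ν (fun j => Metric.ball (a j) ρ) (fun x => absVDMQ n d (E d) H 0 x ^ 2)
    (absVDMQ_meas (E d) H) (ENNReal.ofReal (Real.exp (-(2 * ε * d)))) a (by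
      intro i x hx
      have h := hd0 d hd _ (isPolyDeg_VDM (hE d) (fun j => (x j : Pt n)) i) (x i)
      rw [hx] at h
      have e1 : Function.update (fun j => (x j : Pt n)) i (a i : Pt n) = fun j => (x j : Pt n) := by
        rw [← hx]; exact Function.update_eq_self i _
      have e2 : ∀ y : H, (fun j => ((Function.update x i y j : H) : Pt n)) =
          Function.update (fun j => (x j : Pt n)) i (y : Pt n) := by
        intro y
        funext j
        by_cases hj : j = i
        · subst hj; simp
        · simp [hj]
      simp only [absVDMQ_zero, e2, ← ENNReal.ofReal_pow (norm_nonneg _)]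
      simp only [e1] at h
      exact h)
  have h2 : Set.pi Set.univ (fun j => Metric.ball (a j) ρ) ⊆ Gtilde d H G := by
    intro b hb
    refine hG _ (sdim_pos n d).ne' a b (fun j => ?_) ha
    have := hb j (Set.mem_univ _)
    rwa [Metric.mem_ball, dist_comm] at this
  have h3 := h1.trans (lintegral_mono_set h2)
  rw [Fintype.card_fin] at h3
  rw [Jd]
  refine le_trans (le_of_eq ?_) (ENNReal.rpow_le_rpow h3 (by positivity))
  rw [ENNReal.mul_rpow_of_nonneg _ _ (by positivity), ← ENNReal.ofReal_pow (Real.exp_pos _).le,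
    ENNReal.ofReal_rpow_of_pos (by positivity), ← Real.exp_nat_mul, ← Real.exp_mul,
    ← ENNReal.rpow_natCast, ← ENNReal.rpow_mul, mul_assoc (2 : ℝ) d, ← hpdef]
  congr 3
  · have : (sdim n d : ℝ) * -(2 * ε * d) = -(2 * ε * p) := by rw [hpdef]; ring
    rw [this]
    field_simp
  · push_cast
    field_simp

lemma JQ_eq_WQ {n : ℕ} (E : ∀ d, Fin (sdim n d) → (Fin n → ℕ)) (hE : ∀ d, IsEnum n d (E d))
    {H : Set (Pt n)} (hHc : IsCompact H) (hH : Convex ℝ H)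
    (hHi : (interior H).Nonempty) {ν : Measure H} (hν : ν Set.univ ≤ 1) (hdens : DensityCond H ν)
    (μ : ProbabilityMeasure H) : JQ n E H ν 0 μ = WQ n E H 0 μ := by
  apply le_antisymm
  · refine iInf₂_mono fun G hG => ?_
    refine limsup_le_limsup ?_
    filter_upwards [eventually_ge_atTop 1] with d hd
    exact Jd_le_Wd hd (E d) H ν hν G
  · refine le_iInf₂ fun G hG => ?_
    obtain ⟨G', hG'o, hG'μ, ρ, hρ, hGG⟩ := nbhd_shrink μ hG.1 hG.2
    have key : ∀ ε : ℝ, 0 < ε → ENNReal.ofReal (Real.exp (-ε)) * WQ n E H 0 μ ≤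
        limsup (fun d => Jd n d (E d) H ν 0 G) atTop := by
      intro ε hε
      calc _ ≤ ENNReal.ofReal (Real.exp (-ε)) * limsup (fun d => Wd n d (E d) H 0 G') atTop := by
            gcongr
            exact iInf₂_le G' ⟨hG'o, hG'μ⟩
        _ = limsup (fun d => ENNReal.ofReal (Real.exp (-ε)) * Wd n d (E d) H 0 G') atTop :=
            (ENNReal.limsup_const_mul_of_ne_top ENNReal.ofReal_ne_top).symm
        _ ≤ _ := limsup_le_limsup (Wd_le_Jd E hE hHc hH hHi hν hdens hρ hε hGG)
    have hl : Tendsto (fun ε : ℝ => ENNReal.ofReal (Real.exp (-ε)) * WQ n E H 0 μ) (𝓝[>] 0)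
        (𝓝 (ENNReal.ofReal (Real.exp (-0)) * WQ n E H 0 μ)) := by
      apply ENNReal.Tendsto.mul_const
      · refine Tendsto.mono_left ?_ nhdsWithin_le_nhds
        apply Continuous.tendsto
        exact ENNReal.continuous_ofReal.comp (by fun_prop)
      · left; simp
    simp only [neg_zero, Real.exp_zero, ENNReal.ofReal_one, one_mul] at hl
    refine le_of_tendsto hl ?_
    filter_upwards [self_mem_nhdsWithin] with ε hε
    exact key ε hε

/-- **Remark (independence of `ν`).** Let `H ⊂ ℂⁿ` be a compact convex set with nonempty
interior and let `ν₁, ν₂` be positive Borel measures on `H` of total mass at most `1`, each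
satisfying the density condition. Then for every `μ ∈ 𝓜(H)` the functional `J(μ)` computed
with `ν₁` equals the one computed with `ν₂`; both equal `W(μ)`, which does not involve `ν`. -/
theorem J_independent_of_nu
    (n : ℕ) (hn : 1 ≤ n)
    (E : ∀ d, Fin (sdim n d) → (Fin n → ℕ)) (hE : ∀ d, IsEnum n d (E d))
    (H : Set (Pt n)) (hHcomp : IsCompact H) (hHconv : Convex ℝ H)
    (hHint : (interior H).Nonempty)
    (ν₁ ν₂ : Measure H) (hν₁ : ν₁ Set.univ ≤ 1) (hν₂ : ν₂ Set.univ ≤ 1)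
    (hdens₁ : DensityCond H ν₁) (hdens₂ : DensityCond H ν₂)
    (μ : ProbabilityMeasure H) :
    JQ n E H ν₁ 0 μ = JQ n E H ν₂ 0 μ ∧ JQ n E H ν₁ 0 μ = WQ n E H 0 μ := by
  have h1 := JQ_eq_WQ E hE hHcomp hHconv hHint hν₁ hdens₁ μ
  have h2 := JQ_eq_WQ E hE hHcomp hHconv hHint hν₂ hdens₂ μ
  exact ⟨h1.trans h2.symm, h1⟩

end
end
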